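/- Let q ∈ (0,1), R > 0, ε > 0, and let a : ℕ → ℝ satisfy a i ≥ 0 for all i, with i ↦ (a i)^q summable and ∑'_{i} (a i)^q ≤ R. Then taking λ = (ε²/R)^{1/(1−q)} > 0, one has λ · ∑'_{i} a i/(λ + a i) ≤ ε² and ∑'_{i} a i/(λ + a i) ≤ R^{1/(1−q)} · ε^{−2q/(1−q)}. -/

import Mathlib

/-!
For `x ≥ 0` and `t > 0` the number `x / (t + x)` lies in `[0, 1]`, so it is at most its own `q`-th
power, which in turn is at most `(x / t) ^ q`. Summing over the eigenvalues, the effective dimension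
satisfies `K(t) ≤ R / t ^ q`, that is `t * K(t) ≤ R * t ^ (1 - q)`. The level
`t = (ε ^ 2 / R) ^ (1 / (1 - q))` is the one at which the right-hand side equals `ε ^ 2`, and the
bound on `K(t)` itself is then `ε ^ 2 / t`.
-/

open Set

/-- The effective dimension `K(t) = ∑' i, a i / (t + a i)` at regularization level `t` of an
operator with eigenvalues `a i`. As a `tsum`, it is `0` when the series diverges. -/
noncomputable def effectiveDimension {ι : Type*} (a : ι → ℝ) (t : ℝ) : ℝ :=
  ∑' i, a i / (t + a i)

theorem div_add_le_div_rpow {q t x : ℝ} (hq : q ∈ Icc 0 1) (ht : 0 < t) (hx : 0 ≤ x) :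
    x / (t + x) ≤ (x / t) ^ q := by
  have nonneg : 0 ≤ x / (t + x) := by positivity
  have le_one : x / (t + x) ≤ 1 := div_le_one_of_le₀ (by linarith) (by positivity)
  calc x / (t + x) ≤ (x / (t + x)) ^ q := Real.self_le_rpow_of_le_one nonneg le_one hq.2
    _ ≤ (x / t) ^ q :=
      Real.rpow_le_rpow nonneg (div_le_div_of_nonneg_left hx ht (by linarith)) hq.1

section Summation

variable {ι : Type*} {a : ι → ℝ} {q t : ℝ}

theorem summable_div_rpow (ht : 0 ≤ t) (ha : ∀ i, 0 ≤ a i) (hsum : Summable fun i ↦ a i ^ q) :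
    Summable fun i ↦ (a i / t) ^ q := by
  simpa only [Real.div_rpow (ha _) ht] using hsum.div_const (t ^ q)

theorem summable_div_add (hq : q ∈ Icc 0 1) (ht : 0 < t) (ha : ∀ i, 0 ≤ a i)
    (hsum : Summable fun i ↦ a i ^ q) : Summable fun i ↦ a i / (t + a i) :=
  (summable_div_rpow ht.le ha hsum).of_nonneg_of_le
    (fun i ↦ div_nonneg (ha i) (add_nonneg ht.le (ha i)))
    fun i ↦ div_add_le_div_rpow hq ht (ha i)

theorem effectiveDimension_le_tsum_rpow_div (hq : q ∈ Icc 0 1) (ht : 0 < t) (ha : ∀ i, 0 ≤ a i)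
    (hsum : Summable fun i ↦ a i ^ q) :
    effectiveDimension a t ≤ (∑' i, a i ^ q) / t ^ q :=
  calc effectiveDimension a t ≤ ∑' i, (a i / t) ^ q :=
        (summable_div_add hq ht ha hsum).tsum_le_tsum (fun i ↦ div_add_le_div_rpow hq ht (ha i))
          (summable_div_rpow ht.le ha hsum)
    _ = (∑' i, a i ^ q) / t ^ q := by
        simp only [Real.div_rpow (ha _) ht.le, tsum_div_const]

theorem mul_effectiveDimension_le (hq : q ∈ Icc 0 1) (ht : 0 < t) (ha : ∀ i, 0 ≤ a i)
    (hsum : Summable fun i ↦ a i ^ q) :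
    t * effectiveDimension a t ≤ (∑' i, a i ^ q) * t ^ (1 - q) :=
  calc t * effectiveDimension a t ≤ t * ((∑' i, a i ^ q) / t ^ q) := by
        gcongr
        exact effectiveDimension_le_tsum_rpow_div hq ht ha hsum
    _ = (∑' i, a i ^ q) * t ^ (1 - q) := by
        rw [Real.rpow_sub ht, Real.rpow_one]
        ring

end Summation

theorem div_div_rpow_eq_rpow_mul_rpow {δ R : ℝ} (hδ : 0 < δ) (hR : 0 ≤ R) (p : ℝ) :
    δ / (δ / R) ^ p = R ^ p * δ ^ (1 - p) := by
  rw [Real.div_rpow hδ.le hR, Real.rpow_sub hδ, Real.rpow_one, div_div_eq_mul_div]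
  ring

theorem sq_div_sq_div_rpow {q R ε : ℝ} (hq : q ≠ 1) (hR : 0 ≤ R) (hε : 0 < ε) :
    ε ^ 2 / (ε ^ 2 / R) ^ (1 / (1 - q)) = R ^ (1 / (1 - q)) * ε ^ (-(2 * q) / (1 - q)) := by
  have exponent : 2 * (1 - 1 / (1 - q)) = -(2 * q) / (1 - q) := by
    have : 1 - q ≠ 0 := sub_ne_zero.mpr hq.symm
    field_simp
    ring
  rw [div_div_rpow_eq_rpow_mul_rpow (pow_pos hε 2) hR, ← Real.rpow_natCast_mul hε.le,
    Nat.cast_ofNat, exponent]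

theorem stmt_4_general {ι : Type*} {q R ε : ℝ} (hq : q ∈ Ico 0 1) (hR : 0 < R) (hε : 0 < ε)
    {a : ι → ℝ} (ha : ∀ i, 0 ≤ a i) (hsum : Summable fun i ↦ a i ^ q)
    (hle : ∑' i, a i ^ q ≤ R) :
    0 < (ε ^ 2 / R) ^ (1 / (1 - q)) ∧
    (ε ^ 2 / R) ^ (1 / (1 - q)) * effectiveDimension a ((ε ^ 2 / R) ^ (1 / (1 - q))) ≤ ε ^ 2 ∧
    effectiveDimension a ((ε ^ 2 / R) ^ (1 / (1 - q))) ≤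
      R ^ (1 / (1 - q)) * ε ^ (-(2 * q) / (1 - q)) := by
  rw [← sq_div_sq_div_rpow hq.2.ne hR.le hε]
  set t := (ε ^ 2 / R) ^ (1 / (1 - q)) with t_def
  have t_pos : 0 < t := by positivity
  have t_rpow : t ^ (1 - q) = ε ^ 2 / R := by
    rw [t_def, one_div, Real.rpow_inv_rpow (by positivity) (sub_pos.mpr hq.2).ne']
  have mul_le : t * effectiveDimension a t ≤ ε ^ 2 :=
    calc t * effectiveDimension a t ≤ (∑' i, a i ^ q) * t ^ (1 - q) :=
          mul_effectiveDimension_le (Ico_subset_Icc_self hq) t_pos ha hsum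
      _ ≤ R * t ^ (1 - q) := by gcongr
      _ = ε ^ 2 := by rw [t_rpow, mul_div_cancel₀ _ hR.ne']
  exact ⟨t_pos, mul_le, (le_div_iff₀' t_pos).mpr mul_le⟩

/-- polynomial-decay case of Proposition 3.1. -/
theorem stmt_4 (q : ℝ) (hq : q ∈ Set.Ioo (0 : ℝ) 1) (R : ℝ) (hR : 0 < R)
    (ε : ℝ) (hε : 0 < ε) (a : ℕ → ℝ) (ha : ∀ i, 0 ≤ a i)
    (hsum : Summable (fun i => a i ^ q)) (hle : ∑' i, a i ^ q ≤ R) :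
    0 < (ε ^ 2 / R) ^ (1 / (1 - q)) ∧
    (ε ^ 2 / R) ^ (1 / (1 - q)) *
        ∑' i, a i / ((ε ^ 2 / R) ^ (1 / (1 - q)) + a i) ≤ ε ^ 2 ∧
    (∑' i, a i / ((ε ^ 2 / R) ^ (1 / (1 - q)) + a i)) ≤
        R ^ (1 / (1 - q)) * ε ^ (-(2 * q) / (1 - q)) :=
  stmt_4_general (Ioo_subset_Ico_self hq) hR hε ha hsum hle
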